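/- arXiv:0902.1587 — 4 statements merged into one kernel-verified Lean document; each statement's English description precedes it below -/
import Mathlib

section
/- Let Σ be a finite alphabet and order Σ* by the divisibility (subsequence) ordering. The downward-closed subsets of Σ* are exactly the denotations of simple regular expressions (SREs), i.e., of finite sums of products. -/
/-- Atomic expressions over a finite alphabet `σ`: `a?` (denoting `{ε, a}`) and `A*`
(denoting all words over `A`), for `A` a (nonempty) set of letters. -/
inductive SAtom (σ : Type*) where
  | opt (a : σ)
  | star (A : Finset σ)

/-- Denotation of an atomic expression. -/
def SAtom.den {σ : Type*} : SAtom σ → Set (List σ)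
  | .opt a => {[], [a]}
  | .star A => {w | ∀ x ∈ w, x ∈ A}

/-- Denotation of a product `e₁e₂…eₙ`: the concatenation of the denotations. -/
def prodDen {σ : Type*} : List (SAtom σ) → Set (List σ)
  | [] => {[]}
  | e :: P => {w | ∃ u ∈ e.den, ∃ v ∈ prodDen P, w = u ++ v}

/-- Well-formedness of a product: every starred set of letters is nonempty. -/
def ValidProd {σ : Type*} (P : List (SAtom σ)) : Prop :=
  ∀ e ∈ P, ∀ A : Finset σ, e = .star A → A.Nonempty

/-!
Atoms denote downward-closed sets, and concatenations and unions preserve this property. Conversely,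
let `D` be nonempty and downward closed. Then every left quotient `a⁻¹D = {w | aw ∈ D}` is downward
closed and contained in `D`. Let `A` be the set of letters `a` with `a⁻¹D = D`. Splitting a word of
`D` after its longest prefix over `A` shows that `D = A* (ε + ∑_{a ∉ A} a? (a⁻¹D))`. By Higman's
lemma strict inclusion of downward-closed sets is well founded, and `a⁻¹D ⊂ D` for `a ∉ A`, so by
well-founded induction the quotients on the right, hence `D`, are denoted by SREs.
-/

open Set

/-- `D` is downward closed with respect to `r`. The relation is explicit, in contrast to
`IsLowerSet`, because the `≤` of lists is lexicographic. -/
def DownwardClosed {α : Type*} (r : α → α → Prop) (D : Set α) : Prop :=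
  ∀ u v : α, r u v → v ∈ D → u ∈ D

theorem DownwardClosed.biUnion {α ι : Type*} {r : α → α → Prop} {s : Set ι} {S : ι → Set α}
    (hS : ∀ i ∈ s, DownwardClosed r (S i)) : DownwardClosed r (⋃ i ∈ s, S i) := by
  intro u v huv hv
  obtain ⟨i, hi, hvi⟩ := mem_iUnion₂.1 hv
  exact mem_biUnion hi (hS i hi u v huv hvi)

theorem wellFoundedOn_ssubset_downwardClosed {α : Type*} {r : α → α → Prop}
    (hr : WellQuasiOrdered r) : {D : Set α | DownwardClosed r D}.WellFoundedOn (· ⊂ ·) := by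
  rw [wellFoundedOn_iff_no_descending_seq]
  intro f hf
  have hlt {m n : ℕ} (hmn : m < n) : f n ⊂ f m := f.map_rel_iff.2 hmn
  choose w hw hw' using fun n ↦ exists_of_ssubset (hlt (Nat.lt_succ_self n))
  obtain ⟨m, n, hmn, hwmn⟩ := hr w
  have hsub : f n ⊆ f (m + 1) := by
    obtain rfl | h := (Nat.succ_le_of_lt hmn).eq_or_lt
    exacts [subset_rfl, (hlt h).subset]
  exact hw' m (hf (m + 1) _ _ hwmn (hsub (hw n)))

/-- Concatenation of languages, stated for `Set (List _)` because that is the type of `prodDen`. -/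
local infixr:70 " ⬝ " => image2 (fun u v : List _ ↦ u ++ v)

section Words

variable {σ : Type*}

theorem wellQuasiOrdered_sublist [Finite σ] : WellQuasiOrdered (List.Sublist (α := σ)) := by
  have hσ : (univ : Set σ).PartiallyWellOrderedOn (· = ·) := finite_univ.partiallyWellOrderedOn
  intro f
  obtain ⟨m, n, hmn, h⟩ :=
    hσ.partiallyWellOrderedOn_sublistForall₂ (· = ·) fun k ↦ ⟨f k, fun _ _ ↦ mem_univ _⟩
  obtain ⟨l, hl, hsub⟩ := List.sublistForall₂_iff.1 h
  obtain rfl : f m = l := List.forall₂_eq_eq_eq ▸ hl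
  exact ⟨m, n, hmn, hsub⟩

namespace DownwardClosed

variable {S T D : Set (List σ)}

theorem append (hS : DownwardClosed List.Sublist S) (hT : DownwardClosed List.Sublist T) :
    DownwardClosed List.Sublist (S ⬝ T) := by
  rintro _ _ h ⟨s, hs, t, ht, rfl⟩
  obtain ⟨s', t', rfl, hs', ht'⟩ := List.sublist_append_iff.1 h
  exact mem_image2_of_mem (hS s' s hs' hs) (hT t' t ht' ht)

theorem preimage_cons (hD : DownwardClosed List.Sublist D) (a : σ) :
    DownwardClosed List.Sublist (List.cons a ⁻¹' D) :=
  fun _ _ h ↦ hD _ _ (h.cons_cons a)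

theorem preimage_cons_subset (hD : DownwardClosed List.Sublist D) (a : σ) :
    List.cons a ⁻¹' D ⊆ D :=
  fun w ↦ hD w (a :: w) (List.sublist_cons_self a w)

theorem nil_mem (hD : DownwardClosed List.Sublist D) (hne : D.Nonempty) : [] ∈ D :=
  hne.elim fun w ↦ hD [] w (List.nil_sublist w)

theorem opt_append_preimage_cons_subset (hD : DownwardClosed List.Sublist D) (a : σ) :
    (SAtom.opt a).den ⬝ (List.cons a ⁻¹' D) ⊆ D := by
  rintro _ ⟨u, rfl | rfl, v, hv, rfl⟩
  exacts [hD.preimage_cons_subset a hv, hv]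

end DownwardClosed

theorem star_append_subset {A : Finset σ} {D : Set (List σ)}
    (hA : ∀ a ∈ A, D ⊆ List.cons a ⁻¹' D) : (SAtom.star A).den ⬝ D ⊆ D := by
  rintro _ ⟨u, hu, v, hv, rfl⟩
  induction u with
  | nil => exact hv
  | cons a u ih =>
    obtain ⟨ha, hu⟩ := List.forall_mem_cons.1 hu
    exact hA a ha (ih hu)

theorem subset_star_append {D : Set (List σ)} (hD : DownwardClosed List.Sublist D)
    (A : Finset σ) :
    D ⊆ (SAtom.star A).den ⬝
      ({[]} ∪ ⋃ a ∈ {a | a ∉ A}, (SAtom.opt a).den ⬝ (List.cons a ⁻¹' D)) := by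
  have nil_mem_star : [] ∈ (SAtom.star A).den := List.forall_mem_nil _
  intro w hw
  induction w with
  | nil => exact ⟨[], nil_mem_star, [], .inl rfl, rfl⟩
  | cons a w ih =>
    by_cases ha : a ∈ A
    · obtain ⟨u, hu, v, hv, rfl⟩ := ih (hD.preimage_cons_subset a hw)
      exact ⟨a :: u, List.forall_mem_cons.2 ⟨ha, hu⟩, v, hv, rfl⟩
    · exact ⟨[], nil_mem_star, a :: w, .inr (mem_biUnion ha ⟨[a], .inr rfl, w, hw, rfl⟩), rfl⟩

theorem DownwardClosed.eq_star_append {D : Set (List σ)} (hD : DownwardClosed List.Sublist D)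
    (hne : D.Nonempty) {A : Finset σ} (hA : ∀ a ∈ A, D ⊆ List.cons a ⁻¹' D) :
    D = (SAtom.star A).den ⬝
      ({[]} ∪ ⋃ a ∈ {a | a ∉ A}, (SAtom.opt a).den ⬝ (List.cons a ⁻¹' D)) := by
  refine (subset_star_append hD A).antisymm
    ((image2_subset_left ?_).trans (star_append_subset hA))
  exact union_subset (singleton_subset_iff.2 (hD.nil_mem hne))
    (iUnion₂_subset fun a _ ↦ hD.opt_append_preimage_cons_subset a)

theorem SAtom.downwardClosed_den (e : SAtom σ) : DownwardClosed List.Sublist e.den := by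
  intro u v huv hv
  cases e with
  | opt a =>
    rcases hv with rfl | rfl
    exacts [.inl (List.sublist_nil.1 huv), List.sublist_singleton.1 huv]
  | star A => exact fun x hx ↦ hv x (huv.subset hx)

theorem prodDen_cons (e : SAtom σ) (P : List (SAtom σ)) :
    prodDen (e :: P) = e.den ⬝ prodDen P := by
  ext w
  simp only [prodDen, mem_ofPred_eq, mem_image2, eq_comm]

theorem downwardClosed_prodDen (P : List (SAtom σ)) :
    DownwardClosed List.Sublist (prodDen P) := by
  induction P with
  | nil =>
    rintro u _ h rfl
    exact List.sublist_nil.1 h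
  | cons e P ih => exact prodDen_cons e P ▸ e.downwardClosed_den.append ih

/-- `S` is the denotation of a simple regular expression; a sum is encoded as the list of its
products. -/
def IsSRE (S : Set (List σ)) : Prop :=
  ∃ Ps : List (List (SAtom σ)), (∀ P ∈ Ps, ValidProd P) ∧ S = ⋃ P ∈ Ps, prodDen P

namespace IsSRE

variable {S T : Set (List σ)}

theorem downwardClosed (hS : IsSRE S) : DownwardClosed List.Sublist S := by
  obtain ⟨Ps, -, rfl⟩ := hS
  exact .biUnion (s := {P | P ∈ Ps}) fun P _ ↦ downwardClosed_prodDen P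

theorem empty : IsSRE (∅ : Set (List σ)) := ⟨[], by simp, by simp⟩

theorem singleton_nil : IsSRE ({[]} : Set (List σ)) :=
  ⟨[[]], by simp [ValidProd], by simp [prodDen]⟩

theorem union (hS : IsSRE S) (hT : IsSRE T) : IsSRE (S ∪ T) := by
  obtain ⟨Ps, hPs, rfl⟩ := hS
  obtain ⟨Qs, hQs, rfl⟩ := hT
  refine ⟨Ps ++ Qs, List.forall_mem_append.2 ⟨hPs, hQs⟩, ?_⟩
  simp only [List.mem_append, iUnion_or, iUnion_union_distrib]

theorem biUnion {ι : Type*} {s : Set ι} (hs : s.Finite) {S : ι → Set (List σ)}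
    (hS : ∀ i ∈ s, IsSRE (S i)) : IsSRE (⋃ i ∈ s, S i) := by
  induction s, hs using Set.Finite.induction_on with
  | empty => simpa only [biUnion_empty] using empty
  | insert _ _ ih =>
    obtain ⟨hi, hs⟩ := forall_mem_insert.1 hS
    simpa only [biUnion_insert] using hi.union (ih hs)

theorem append {e : SAtom σ} (he : ValidProd [e]) (hS : IsSRE S) : IsSRE (e.den ⬝ S) := by
  obtain ⟨Ps, hPs, rfl⟩ := hS
  refine ⟨Ps.map (e :: ·), List.forall_mem_map.2 fun P hP ↦ ?_, ?_⟩
  · exact List.forall_mem_cons.2 ⟨List.forall_mem_singleton.1 he, hPs P hP⟩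
  · simp only [image2_iUnion₂_right, List.mem_map, iUnion_exists, biUnion_and',
      iUnion_iUnion_eq_right, prodDen_cons]

theorem opt_append (a : σ) (hS : IsSRE S) : IsSRE ((SAtom.opt a).den ⬝ S) :=
  hS.append (by simp [ValidProd])

theorem star_append (A : Finset σ) (hS : IsSRE S) : IsSRE ((SAtom.star A).den ⬝ S) := by
  obtain rfl | hA := A.eq_empty_or_nonempty
  · have den_star_empty : (SAtom.star (∅ : Finset σ)).den = {[]} := by
      ext w
      simp [SAtom.den, List.eq_nil_iff_forall_not_mem]
    simpa only [den_star_empty, image2_singleton_left, List.nil_append, image_id'] using hS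
  · exact hS.append (by simpa [ValidProd] using hA)

end IsSRE

theorem DownwardClosed.isSRE [Finite σ] {D : Set (List σ)}
    (hD : DownwardClosed List.Sublist D) : IsSRE D := by
  refine (wellFoundedOn_ssubset_downwardClosed wellQuasiOrdered_sublist).induction hD
    fun D (hD : DownwardClosed _ D) ih ↦ ?_
  obtain rfl | hne := D.eq_empty_or_nonempty
  · exact .empty
  obtain ⟨A, hA⟩ : ∃ A : Finset σ, ∀ a, a ∈ A ↔ D ⊆ List.cons a ⁻¹' D :=
    ⟨(toFinite {a | D ⊆ List.cons a ⁻¹' D}).toFinset, fun a ↦ Finite.mem_toFinset _⟩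
  have isSRE_quotient : ∀ a ∉ A, IsSRE (List.cons a ⁻¹' D) := fun a ha ↦
    ih _ (hD.preimage_cons a) ⟨hD.preimage_cons_subset a, fun h ↦ ha ((hA a).2 h)⟩
  rw [hD.eq_star_append hne fun a ↦ (hA a).1]
  exact (IsSRE.singleton_nil.union <| .biUnion (toFinite _) fun a ha ↦
    (isSRE_quotient a ha).opt_append a).star_append A

end Words

/-- For a finite alphabet `σ`, the downward-closed subsets of `σ*` under the divisibility
(subsequence) ordering are exactly the denotations of simple regular expressions,
i.e. of finite sums (possibly empty) of products. -/
theorem stmt6 {σ : Type*} [Fintype σ] (D : Set (List σ)) :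
    (∀ u v : List σ, u.Sublist v → v ∈ D → u ∈ D) ↔
    ∃ Ps : List (List (SAtom σ)), (∀ P ∈ Ps, ValidProd P) ∧ D = ⋃ P ∈ Ps, prodDen P :=
  ⟨DownwardClosed.isSRE, IsSRE.downwardClosed⟩
end

section
/- Let (X,≤) be a well quasi-ordered set and order the set X* of finite words over X by the embedding quasi-ordering ≤*. The ideals of (X*, ≤*) (equivalently, the irreducible closed subsets of X* with the Alexandroff topology of ≤*) are exactly the denotations of products over X. -/
/-- An ideal of a quasi-ordered set: nonempty, downward closed, and directed. -/
def IsIdeal {X : Type*} [Preorder X] (S : Set X) : Prop :=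
  S.Nonempty ∧ IsLowerSet S ∧ DirectedOn (· ≤ ·) S

/-- A quasi-ordering is a well quasi-ordering iff every infinite sequence contains an
infinite ascending subsequence. -/
def IsWqo (X : Type*) [Preorder X] : Prop :=
  ∀ f : ℕ → X, ∃ g : ℕ → ℕ, StrictMono g ∧ ∀ m n : ℕ, m ≤ n → f (g m) ≤ f (g n)

/-- Word embedding: `a₁…a_m` embeds into `w₀a′₁w₁…w_{m−1}a′_m w_m` whenever `r aᵢ a′ᵢ`
for all `i`.  (`WordEmb (· ≤ ·)` is the embedding quasi-ordering `≤*`.) -/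
inductive WordEmb {α β : Type*} (r : α → β → Prop) : List α → List β → Prop where
  | nil (l : List β) : WordEmb r [] l
  | cons {a : α} {b : β} {l₁ : List α} {l₂ : List β} :
      r a b → WordEmb r l₁ l₂ → WordEmb r (a :: l₁) (b :: l₂)
  | skip {b : β} {l₁ : List α} {l₂ : List β} :
      WordEmb r l₁ l₂ → WordEmb r l₁ (b :: l₂)

/-- Atomic expressions over `X`: `C?` with `C` an ideal of `X`, denoting the words of length
at most 1 with letter in `C`, and `A*` with `A` a finite nonempty set of ideals of `X`,
denoting all words with letters in `⋃ A`. -/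
inductive WAtom (X : Type*) where
  | opt (C : Set X)
  | star (A : Finset (Set X))

/-- Denotation of atomic expressions over `X`. -/
def WAtom.den {X : Type*} : WAtom X → Set (List X)
  | .opt C => {[]} ∪ {w | ∃ x ∈ C, w = [x]}
  | .star A => {w | ∀ x ∈ w, ∃ C ∈ A, x ∈ C}

/-- Denotation of a product `e₁e₂…e_k`: the concatenation of the denotations. -/
def wprodDen {X : Type*} : List (WAtom X) → Set (List X)
  | [] => {[]}
  | e :: P => {w | ∃ u ∈ e.den, ∃ v ∈ wprodDen P, w = u ++ v}

/-- Well-formedness of atomic expressions: `C` is an ideal of `X` in `C?`, and `A` is a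
finite nonempty set of ideals of `X` in `A*`. -/
def WValidAtom {X : Type*} [Preorder X] : WAtom X → Prop
  | .opt C => IsIdeal C
  | .star A => A.Nonempty ∧ ∀ C ∈ A, IsIdeal C

/-!
Work in the free monoid on `X` ordered by word embedding, where concatenation of languages is the
pointwise product of sets. Products are ideals because atomic expressions are, and because a
pointwise product of ideals is an ideal.

For the converse, induct on an ideal `S` along the well-founded inclusion of lower sets. If `S` is
closed under concatenation, it consists of all words over its letters, and these letters form a
finite union of ideals of `X`. Otherwise some `u, v ∈ S` have `u * v ∉ S`, and reading a word of
`S` up to the first letter that completes `u` shows that `S ⊆ {w | ¬ u ≤ w} · X? · {w | ¬ v ≤ w}`.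
An ideal contained in a product of lower sets is a product of ideals contained in the factors, so
`S = I · K · J` with `K ⊆ X?`, and `I`, `J` are strictly smaller than `S` because `u ∉ I` and
`v ∉ J`.
-/

open scoped Pointwise

section Ideals

variable {α β : Type*} [Preorder α] [Preorder β]

theorem IsWqo.wellQuasiOrderedLE (h : IsWqo α) : WellQuasiOrderedLE α where
  wqo f :=
    let ⟨g, hg, hfg⟩ := h f
    ⟨g 0, g 1, hg one_pos, hfg 0 1 zero_le_one⟩

namespace IsIdeal

theorem nonempty {S : Set α} (hS : IsIdeal S) : S.Nonempty := hS.1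

theorem isLowerSet {S : Set α} (hS : IsIdeal S) : IsLowerSet S := hS.2.1

theorem directedOn {S : Set α} (hS : IsIdeal S) : DirectedOn (· ≤ ·) S := hS.2.2

theorem supPrime {s : LowerSet α} (hs : IsIdeal (s : Set α)) : SupPrime s := by
  refine ⟨fun hmin ↦ ?_, fun b c hbc ↦ ?_⟩
  · rw [isMin_iff_eq_bot.1 hmin] at hs
    exact Set.not_nonempty_empty hs.nonempty
  · by_contra! hnot
    obtain ⟨x, hxs, hxb⟩ := Set.not_subset.1 hnot.1
    obtain ⟨y, hys, hyc⟩ := Set.not_subset.1 hnot.2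
    obtain ⟨z, hzs, hxz, hyz⟩ := hs.directedOn x hxs y hys
    rcases hbc hzs with hzb | hzc
    · exact hxb (b.lower hxz hzb)
    · exact hyc (c.lower hyz hzc)

end IsIdeal

theorem isIdeal_of_supIrred {s : LowerSet α} (hs : SupIrred s) : IsIdeal (s : Set α) := by
  refine ⟨LowerSet.coe_nonempty.2 hs.ne_bot, s.lower, fun x hx y hy ↦ ?_⟩
  by_contra! hxy
  have hcover : s.erase x ⊔ s.erase y = s := by
    refine le_antisymm (sup_le LowerSet.erase_le LowerSet.erase_le) fun z hz ↦ ?_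
    by_cases hxz : x ≤ z
    · exact Or.inr ⟨hz, hxy z hz hxz⟩
    · exact Or.inl ⟨hz, hxz⟩
  rcases hs.2 hcover with h | h
  · exact LowerSet.erase_eq.1 h hx
  · exact LowerSet.erase_eq.1 h hy

instance wellFoundedLT_lowerSet [WellQuasiOrderedLE α] : WellFoundedLT (LowerSet α) := by
  refine ⟨wellFounded_iff_isEmpty_descending_chain.2 ⟨fun ⟨f, hf⟩ ↦ ?_⟩⟩
  have hanti : StrictAnti f := strictAnti_nat_of_succ_lt hf
  choose x hx hx' using fun n ↦ Set.exists_of_ssubset (hf n)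
  obtain ⟨m, n, hmn, hle⟩ := wellQuasiOrdered_le x
  exact hx' m ((f (m + 1)).lower hle (hanti.antitone (Nat.succ_le_of_lt hmn) (hx n)))

theorem exists_finset_isIdeal_sup_eq [WellQuasiOrderedLE α] (s : LowerSet α) :
    ∃ t : Finset (LowerSet α), t.sup id = s ∧ ∀ C ∈ t, IsIdeal (C : Set α) := by
  obtain ⟨t, hts, ht⟩ := exists_supIrred_decomposition s
  exact ⟨t, hts, fun C hC ↦ isIdeal_of_supIrred (ht hC)⟩

namespace IsIdeal

theorem exists_lowerClosure_image_eq [WellQuasiOrderedLE α] {f : α → β} (hf : Monotone f)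
    {D : Set α} (hD : IsLowerSet D) {S : Set β} (hS : IsIdeal S) (hSD : S ⊆ f '' D) :
    ∃ C ⊆ D, IsIdeal C ∧ (lowerClosure (f '' C) : Set β) = S := by
  let T : LowerSet α := ⟨D ∩ f ⁻¹' S, hD.inter (hS.isLowerSet.preimage hf)⟩
  obtain ⟨t, htT, ht⟩ := exists_finset_isIdeal_sup_eq T
  have hcover : (⟨S, hS.isLowerSet⟩ : LowerSet β) ≤ t.sup fun C ↦ lowerClosure (f '' C) := by
    intro y hy
    obtain ⟨x, hxD, rfl⟩ := hSD hy
    have hx : x ∈ t.sup id := htT ▸ (⟨hxD, hy⟩ : x ∈ D ∩ f ⁻¹' S)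
    rw [Finset.sup_eq_iSup, LowerSet.mem_iSup₂_iff] at hx
    rw [SetLike.mem_coe, Finset.sup_eq_iSup, LowerSet.mem_iSup₂_iff]
    obtain ⟨C, hC, hxC⟩ := hx
    exact ⟨C, hC, subset_lowerClosure (Set.mem_image_of_mem f hxC)⟩
  obtain ⟨C, hC, hSC⟩ := (supPrime hS).le_finset_sup.1 hcover
  have hCT : (C : Set α) ⊆ D ∩ f ⁻¹' S := (Finset.le_sup (f := id) hC).trans_eq htT
  refine ⟨C, fun x hx ↦ (hCT hx).1, ht C hC, Set.Subset.antisymm ?_ hSC⟩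
  exact lowerClosure_min (Set.image_subset_iff.2 fun x hx ↦ (hCT hx).2) hS.isLowerSet

theorem image_fst {C : Set (α × β)} (hC : IsIdeal C) : IsIdeal (Prod.fst '' C) := by
  refine ⟨hC.nonempty.image _, ?_, hC.directedOn.mono_comp fun _ _ h ↦ h.1⟩
  rintro _ a haa' ⟨⟨a', b⟩, h, rfl⟩
  exact ⟨(a, b), hC.isLowerSet (Prod.mk_le_mk.2 ⟨haa', le_rfl⟩) h, rfl⟩

theorem image_snd {C : Set (α × β)} (hC : IsIdeal C) : IsIdeal (Prod.snd '' C) := by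
  refine ⟨hC.nonempty.image _, ?_, hC.directedOn.mono_comp fun _ _ h ↦ h.2⟩
  rintro _ b hbb' ⟨⟨a, b'⟩, h, rfl⟩
  exact ⟨(a, b), hC.isLowerSet (Prod.mk_le_mk.2 ⟨le_rfl, hbb'⟩) h, rfl⟩

theorem image_fst_prod_image_snd {C : Set (α × β)} (hC : IsIdeal C) :
    (Prod.fst '' C) ×ˢ (Prod.snd '' C) = C := by
  refine Set.Subset.antisymm ?_ Set.subset_fst_image_prod_snd_image
  rintro ⟨_, _⟩ ⟨⟨p, hp, rfl⟩, ⟨q, hq, rfl⟩⟩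
  obtain ⟨r, hr, hpr, hqr⟩ := hC.directedOn p hp q hq
  exact hC.isLowerSet (Prod.mk_le_mk.2 ⟨hpr.1, hqr.2⟩) hr

theorem exists_lowerClosure_mul_eq {M : Type*} [Mul M] [Preorder M] [MulLeftMono M]
    [MulRightMono M] [WellQuasiOrderedLE M] {S A B : Set M} (hS : IsIdeal S)
    (hA : IsLowerSet A) (hB : IsLowerSet B) (hSAB : S ⊆ A * B) :
    ∃ I ⊆ A, ∃ J ⊆ B, IsIdeal I ∧ IsIdeal J ∧ (lowerClosure (I * J) : Set M) = S := by
  have hmul : Monotone fun p : M × M ↦ p.1 * p.2 := fun _ _ h ↦ mul_le_mul' h.1 h.2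
  rw [← Set.image_mul_prod] at hSAB
  obtain ⟨C, hCAB, hC, rfl⟩ := hS.exists_lowerClosure_image_eq hmul (hA.prod hB) hSAB
  refine ⟨_, ?_, _, ?_, hC.image_fst, hC.image_snd, ?_⟩
  · exact Set.image_subset_iff.2 fun p hp ↦ (hCAB hp).1
  · exact Set.image_subset_iff.2 fun p hp ↦ (hCAB hp).2
  · rw [← Set.image_mul_prod, hC.image_fst_prod_image_snd]

end IsIdeal

end Ideals

namespace WordEmb

variable {α β : Type*} {r : α → β → Prop}

theorem iff_sublistForall₂ {u : List α} {v : List β} :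
    WordEmb r u v ↔ List.SublistForall₂ r u v := by
  constructor <;> intro h
  · induction h with
    | nil => exact .nil
    | cons hab _ ih => exact .cons hab ih
    | skip _ ih => exact .cons_right ih
  · induction h with
    | nil => exact .nil _
    | cons hab _ ih => exact .cons hab ih
    | cons_right _ ih => exact .skip ih

theorem append {u₁ u₂ : List α} {v₁ v₂ : List β} (h₁ : WordEmb r u₁ v₁) (h₂ : WordEmb r u₂ v₂) :
    WordEmb r (u₁ ++ u₂) (v₁ ++ v₂) := by
  induction h₁ with
  | nil l =>
    induction l with
    | nil => exact h₂
    | cons _ _ ih => exact .skip ih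
  | cons hab _ ih => exact .cons hab ih
  | skip _ ih => exact .skip ih

theorem exists_append_eq {w : List α} {v₁ v₂ : List β} (h : WordEmb r w (v₁ ++ v₂)) :
    ∃ w₁ w₂, WordEmb r w₁ v₁ ∧ WordEmb r w₂ v₂ ∧ w₁ ++ w₂ = w := by
  induction v₁ generalizing w with
  | nil => exact ⟨[], w, .nil _, h, rfl⟩
  | cons b v₁ ih =>
    cases h with
    | nil => exact ⟨[], [], .nil _, .nil _, rfl⟩
    | cons hab h =>
      obtain ⟨w₁, w₂, h₁, h₂, rfl⟩ := ih h
      exact ⟨_ :: w₁, w₂, .cons hab h₁, h₂, rfl⟩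
    | skip h =>
      obtain ⟨w₁, w₂, h₁, h₂, rfl⟩ := ih h
      exact ⟨w₁, w₂, .skip h₁, h₂, rfl⟩

end WordEmb

/-- Words over `X` as elements of the free monoid, so that concatenation is multiplication and
concatenation of languages is the pointwise product of sets. -/
abbrev Word (X : Type*) : Type _ := FreeMonoid X

namespace Word

open FreeMonoid (of)

variable {X : Type*}

theorem exists_prefix_notMem_mul_of_mem {U : Set (Word X)} (hU : 1 ∉ U) {w : Word X} (hw : w ∈ U) :
    ∃ p x q, w = p * of x * q ∧ p ∉ U ∧ p * of x ∈ U := by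
  induction w using List.reverseRecOn with
  | nil => exact absurd hw hU
  | append_singleton w x ih =>
    by_cases hwU : w ∈ U
    · obtain ⟨p, y, q, rfl, hp, hpy⟩ := ih hwU
      exact ⟨p, y, q * of x, mul_assoc _ _ _, hp, hpy⟩
    · exact ⟨w, x, 1, (mul_one _).symm, hwU, hw⟩

variable [Preorder X]

instance : Preorder (Word X) where
  le u v := WordEmb (· ≤ ·) u.toList v.toList
  le_refl u := WordEmb.iff_sublistForall₂.2 (refl_of (List.SublistForall₂ (· ≤ ·)) u.toList)
  le_trans u v w huv hvw := WordEmb.iff_sublistForall₂.2 <|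
    trans_of (List.SublistForall₂ (· ≤ ·)) (WordEmb.iff_sublistForall₂.1 huv)
      (WordEmb.iff_sublistForall₂.1 hvw)

theorem le_iff_sublistForall₂ {u v : Word X} :
    u ≤ v ↔ List.SublistForall₂ (· ≤ ·) u.toList v.toList :=
  WordEmb.iff_sublistForall₂

theorem one_le (w : Word X) : 1 ≤ w := WordEmb.nil _

theorem le_one_iff {w : Word X} : w ≤ 1 ↔ w = 1 := by
  constructor
  · rintro ⟨⟩
    rfl
  · rintro rfl
    exact le_rfl

theorem of_le_iff {x : X} {w : Word X} : of x ≤ w ↔ ∃ y ∈ w, x ≤ y := by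
  rw [le_iff_sublistForall₂, List.sublistForall₂_iff]
  simp only [FreeMonoid.toList_of, List.forall₂_cons_left_iff, List.forall₂_nil_left_iff]
  constructor
  · rintro ⟨_, ⟨y, _, hxy, rfl, rfl⟩, hyw⟩
    exact ⟨y, List.singleton_sublist.1 hyw, hxy⟩
  · rintro ⟨y, hyw, hxy⟩
    exact ⟨[y], ⟨y, [], hxy, rfl, rfl⟩, List.singleton_sublist.2 hyw⟩

theorem of_le_of_iff {x y : X} : of x ≤ of y ↔ x ≤ y := by
  simp [of_le_iff]

theorem not_of_le_one {x : X} : ¬ of x ≤ 1 := nofun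

theorem le_of_iff {w : Word X} {x : X} : w ≤ of x ↔ w = 1 ∨ ∃ y ≤ x, w = of y := by
  constructor
  · rintro (_ | ⟨hyx, ⟨⟩⟩ | ⟨⟨⟩⟩)
    · exact Or.inl rfl
    · exact Or.inr ⟨_, hyx, rfl⟩
    · exact Or.inl rfl
  · rintro (rfl | ⟨y, hyx, rfl⟩)
    · exact one_le _
    · exact of_le_of_iff.2 hyx

instance : MulLeftMono (Word X) where
  elim w _ _ huv := WordEmb.append (le_refl w) huv

instance : MulRightMono (Word X) where
  elim w _ _ huv := WordEmb.append huv (le_refl w)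

theorem isLowerSet_mul {A B : Set (Word X)} (hA : IsLowerSet A) (hB : IsLowerSet B) :
    IsLowerSet (A * B) := by
  rintro _ w hw ⟨u, hu, v, hv, rfl⟩
  obtain ⟨u', v', hu', hv', rfl⟩ := WordEmb.exists_append_eq hw
  exact Set.mul_mem_mul (hA hu' hu) (hB hv' hv)

instance [WellQuasiOrderedLE X] : WellQuasiOrderedLE (Word X) where
  wqo f := by
    have hX : (Set.univ : Set X).PartiallyWellOrderedOn (· ≤ ·) :=
      Set.partiallyWellOrderedOn_univ_iff.2 wellQuasiOrdered_le
    obtain ⟨m, n, hmn, hle⟩ := hX.partiallyWellOrderedOn_sublistForall₂ (· ≤ ·)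
      fun n ↦ ⟨(f n).toList, fun _ _ ↦ Set.mem_univ _⟩
    exact ⟨m, n, hmn, le_iff_sublistForall₂.2 hle⟩

/-- The ideals of words, a submonoid of the languages under concatenation. -/
def ideals (X : Type*) [Preorder X] : Submonoid (Set (Word X)) where
  carrier := {S | IsIdeal S}
  one_mem' := by
    refine ⟨Set.one_nonempty, ?_, ?_⟩
    · rintro _ w hw rfl
      exact le_one_iff.1 hw
    · rintro _ rfl _ rfl
      exact ⟨1, rfl, le_rfl, le_rfl⟩
  mul_mem' := by
    rintro A B hA hB
    refine ⟨hA.nonempty.mul hB.nonempty, isLowerSet_mul hA.isLowerSet hB.isLowerSet, ?_⟩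
    rintro _ ⟨u₁, hu₁, v₁, hv₁, rfl⟩ _ ⟨u₂, hu₂, v₂, hv₂, rfl⟩
    obtain ⟨u, hu, h₁u, h₂u⟩ := hA.directedOn u₁ hu₁ u₂ hu₂
    obtain ⟨v, hv, h₁v, h₂v⟩ := hB.directedOn v₁ hv₁ v₂ hv₂
    exact ⟨u * v, Set.mul_mem_mul hu hv, mul_le_mul' h₁u h₁v, mul_le_mul' h₂u h₂v⟩

theorem mem_ideals {S : Set (Word X)} : S ∈ ideals X ↔ IsIdeal S := Iff.rfl

theorem one_mem_of_isIdeal {S : Set (Word X)} (hS : IsIdeal S) : 1 ∈ S :=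
  let ⟨w, hw⟩ := hS.nonempty
  hS.isLowerSet (one_le w) hw

theorem exists_mul_eq_of_isIdeal [WellQuasiOrderedLE X] {S A B : Set (Word X)} (hS : IsIdeal S)
    (hA : IsLowerSet A) (hB : IsLowerSet B) (hSAB : S ⊆ A * B) :
    ∃ I ⊆ A, ∃ J ⊆ B, IsIdeal I ∧ IsIdeal J ∧ I * J = S := by
  obtain ⟨I, hIA, J, hJB, hI, hJ, rfl⟩ := hS.exists_lowerClosure_mul_eq hA hB hSAB
  exact ⟨I, hIA, J, hJB, hI, hJ, (isLowerSet_mul hI.isLowerSet hJ.isLowerSet).lowerClosure.symm⟩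

end Word

namespace WAtom

open FreeMonoid (of)

variable {X : Type*}

/-- The denotation of an atomic expression as a language in the free monoid. -/
def lang (e : WAtom X) : Set (Word X) := FreeMonoid.toList ⁻¹' e.den

theorem lang_opt (C : Set X) : (opt C).lang = insert 1 (of '' C) := by
  ext w
  exact or_congr_right (exists_congr fun x ↦ and_congr_right fun _ ↦ eq_comm)

theorem mem_lang_star {A : Finset (Set X)} {w : Word X} :
    w ∈ (star A).lang ↔ ∀ x ∈ w, ∃ C ∈ A, x ∈ C := Iff.rfl

theorem lang_opt_empty : (opt (∅ : Set X)).lang = 1 := by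
  rw [lang_opt, Set.image_empty, insert_empty_eq, Set.singleton_one]

theorem lang_star_empty : (star (∅ : Finset (Set X))).lang = 1 := by
  ext w
  rw [mem_lang_star, Set.mem_one]
  refine ⟨fun hw ↦ ?_, ?_⟩
  · exact List.eq_nil_iff_forall_not_mem.2 fun x hx ↦ by simpa using hw x hx
  · rintro rfl
    nofun

variable [Preorder X]

theorem isLowerSet_lang_opt {C : Set X} (hC : IsLowerSet C) : IsLowerSet (opt C).lang := by
  rw [lang_opt]
  rintro _ w hw (rfl | ⟨x, hx, rfl⟩)
  · exact Or.inl (Word.le_one_iff.1 hw)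
  · rcases Word.le_of_iff.1 hw with rfl | ⟨y, hyx, rfl⟩
    · exact Set.mem_insert _ _
    · exact Set.mem_insert_of_mem _ (Set.mem_image_of_mem of (hC hyx hx))

theorem isIdeal_lang_opt {C : Set X} (hC : IsIdeal C) : IsIdeal (opt C).lang := by
  refine ⟨?_, isLowerSet_lang_opt hC.isLowerSet, ?_⟩ <;> rw [lang_opt]
  · exact Set.insert_nonempty _ _
  · refine DirectedOn.insert 1 ?_ fun w hw ↦ ⟨w, hw, Word.one_le w, le_rfl⟩
    exact hC.directedOn.mono_comp fun _ _ ↦ Word.of_le_of_iff.2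

theorem isIdeal_lang_star {A : Finset (Set X)} (hA : ∀ C ∈ A, IsLowerSet C) :
    IsIdeal (star A).lang := by
  refine ⟨⟨1, nofun⟩, fun v u huv hv x hxu ↦ ?_, fun u hu v hv ↦ ⟨u * v, ?_, ?_, ?_⟩⟩
  · obtain ⟨y, hyv, hxy⟩ := Word.of_le_iff.1 ((Word.of_le_iff.2 ⟨x, hxu, le_rfl⟩).trans huv)
    obtain ⟨C, hC, hyC⟩ := hv y hyv
    exact ⟨C, hC, hA C hC hxy hyC⟩
  · exact fun x hx ↦ (FreeMonoid.mem_mul.1 hx).elim (hu x) (hv x)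
  · exact le_mul_of_one_le_right' (Word.one_le v)
  · exact le_mul_of_one_le_left' (Word.one_le u)

theorem isIdeal_lang {e : WAtom X} (he : WValidAtom e) : IsIdeal e.lang := by
  cases e with
  | opt C => exact isIdeal_lang_opt he
  | star A => exact isIdeal_lang_star fun C hC ↦ (he.2 C hC).isLowerSet

end WAtom

namespace Word

open FreeMonoid (of toList)

variable {X : Type*}

theorem preimage_wprodDen_eq_prod (P : List (WAtom X)) :
    toList ⁻¹' wprodDen P = (P.map WAtom.lang).prod := by
  induction P with
  | nil => rfl
  | cons e P ih =>
    rw [List.map_cons, List.prod_cons, ← ih]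
    ext w
    exact ⟨fun ⟨u, hu, v, hv, h⟩ ↦ ⟨u, hu, v, hv, h.symm⟩,
      fun ⟨u, hu, v, hv, h⟩ ↦ ⟨u, hu, v, hv, h.symm⟩⟩

variable [Preorder X]

/-- The denotations of products over `X`, as the submonoid of languages generated by the valid
atomic expressions. -/
def products (X : Type*) [Preorder X] : Submonoid (Set (Word X)) :=
  Submonoid.closure (WAtom.lang '' {e | WValidAtom e})

theorem lang_mem_products {e : WAtom X} (he : WValidAtom e) : e.lang ∈ products X :=
  Submonoid.subset_closure (Set.mem_image_of_mem _ he)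

theorem mem_products_iff {S : Set (Word X)} :
    S ∈ products X ↔ ∃ P : List (WAtom X), (∀ e ∈ P, WValidAtom e) ∧ S = toList ⁻¹' wprodDen P := by
  simp only [preimage_wprodDen_eq_prod]
  constructor
  · intro hS
    induction hS using Submonoid.closure_induction with
    | mem _ he =>
      obtain ⟨e, he, rfl⟩ := he
      exact ⟨[e], by simpa using he, by simp⟩
    | one => exact ⟨[], by simp, rfl⟩
    | mul _ _ _ _ hS hT =>
      obtain ⟨P, hP, rfl⟩ := hS
      obtain ⟨Q, hQ, rfl⟩ := hT
      exact ⟨P ++ Q, List.forall_mem_append.2 ⟨hP, hQ⟩, by simp⟩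
  · rintro ⟨P, hP, rfl⟩
    exact list_prod_mem <| List.forall_mem_map.2 fun e he ↦ lang_mem_products (hP e he)

theorem mem_products_of_subset_lang_opt {K : Set (Word X)} (hK : IsIdeal K)
    (hshort : K ⊆ (WAtom.opt Set.univ).lang) : K ∈ products X := by
  rw [WAtom.lang_opt, Set.image_univ] at hshort
  have hlang : K = (WAtom.opt (of ⁻¹' K)).lang := by
    rw [WAtom.lang_opt, Set.image_preimage_eq_inter_range]
    refine Set.Subset.antisymm (fun w hw ↦ (hshort hw).imp_right fun hw' ↦ ⟨hw, hw'⟩) ?_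
    exact Set.insert_subset (one_mem_of_isIdeal hK) Set.inter_subset_left
  rw [hlang]
  rcases (of ⁻¹' K).eq_empty_or_nonempty with hempty | hne
  · rw [hempty, WAtom.lang_opt_empty]
    exact one_mem _
  · refine lang_mem_products ⟨hne, fun y x hxy hy ↦ ?_, fun x hx y hy ↦ ?_⟩
    · exact hK.isLowerSet (of_le_of_iff.2 hxy) hy
    · obtain ⟨w, hw, hxw, hyw⟩ := hK.directedOn _ hx _ hy
      rcases hshort hw with rfl | ⟨z, rfl⟩
      · exact absurd hxw not_of_le_one
      · exact ⟨z, hw, of_le_of_iff.1 hxw, of_le_of_iff.1 hyw⟩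

theorem mem_iff_forall_of_mem {S : Submonoid (Word X)} (hS : IsLowerSet (S : Set (Word X)))
    {w : Word X} : w ∈ S ↔ ∀ x ∈ w, of x ∈ S := by
  refine ⟨fun hw x hx ↦ hS (of_le_iff.2 ⟨x, hx, le_rfl⟩) hw, fun hw ↦ ?_⟩
  induction w using FreeMonoid.inductionOn' with
  | one => exact one_mem S
  | of_mul x w ih =>
    simp only [FreeMonoid.mem_mul, FreeMonoid.mem_of, forall_eq_or_imp] at hw
    exact mul_mem hw.1 (ih hw.2)

theorem lang_star_mem_products {A : Finset (Set X)} (hA : ∀ C ∈ A, IsIdeal C) :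
    (WAtom.star A).lang ∈ products X := by
  rcases A.eq_empty_or_nonempty with rfl | hne
  · rw [WAtom.lang_star_empty]
    exact one_mem _
  · exact lang_mem_products ⟨hne, hA⟩

theorem submonoid_mem_products [WellQuasiOrderedLE X] {S : Submonoid (Word X)}
    (hS : IsLowerSet (S : Set (Word X))) : (S : Set (Word X)) ∈ products X := by
  classical
  let letters : LowerSet X := ⟨{x | of x ∈ S}, fun _ _ h ↦ hS (of_le_of_iff.2 h)⟩
  obtain ⟨t, htl, ht⟩ := exists_finset_isIdeal_sup_eq letters
  have hletters (x : X) : of x ∈ S ↔ ∃ C ∈ t, x ∈ C := by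
    change x ∈ letters ↔ _
    simp only [← htl, Finset.sup_eq_iSup, LowerSet.mem_iSup₂_iff, id, exists_prop]
  have hlang : (S : Set (Word X)) = (WAtom.star (t.image (↑))).lang := by
    ext w
    rw [SetLike.mem_coe, mem_iff_forall_of_mem hS, WAtom.mem_lang_star]
    simp only [hletters, Finset.exists_mem_image, SetLike.mem_coe]
  rw [hlang]
  exact lang_star_mem_products (Finset.forall_mem_image.2 ht)

theorem compl_Ici_mul_subset {u v : Word X} (hu : ¬ u ≤ 1) (hv : ¬ v ≤ 1) :
    (Set.Ici (u * v))ᶜ ⊆ (Set.Ici u)ᶜ * (WAtom.opt Set.univ).lang * (Set.Ici v)ᶜ := by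
  intro w hw
  by_cases huw : u ≤ w
  · obtain ⟨p, x, q, rfl, hp, hpx⟩ := exists_prefix_notMem_mul_of_mem (U := Set.Ici u) hu huw
    refine Set.mul_mem_mul (Set.mul_mem_mul hp ?_) fun hvq ↦ hw ?_
    · exact Or.inr ⟨x, Set.mem_univ x, rfl⟩
    · exact Set.mem_Ici.2 (mul_le_mul' hpx hvq)
  · exact ⟨w, ⟨w, huw, 1, Or.inl rfl, mul_one w⟩, 1, hv, mul_one w⟩

theorem exists_mul_mul_eq_of_isIdeal [WellQuasiOrderedLE X] {S A B C : Set (Word X)}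
    (hS : IsIdeal S) (hA : IsLowerSet A) (hB : IsLowerSet B) (hC : IsLowerSet C)
    (hSABC : S ⊆ A * B * C) :
    ∃ I ⊆ A, ∃ K ⊆ B, ∃ J ⊆ C, IsIdeal I ∧ IsIdeal K ∧ IsIdeal J ∧ I * K * J = S := by
  obtain ⟨_, hAB, J, hJC, hIK, hJ, rfl⟩ := exists_mul_eq_of_isIdeal hS
    (isLowerSet_mul hA hB) hC hSABC
  obtain ⟨I, hIA, K, hKB, hI, hK, rfl⟩ := exists_mul_eq_of_isIdeal hIK hA hB hAB
  exact ⟨I, hIA, K, hKB, J, hJC, hI, hK, hJ, rfl⟩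

theorem exists_ssubset_mul_mul_eq_of_mul_notMem [WellQuasiOrderedLE X] {S : Set (Word X)}
    (hS : IsIdeal S) {u v : Word X} (hu : u ∈ S) (hv : v ∈ S) (huv : u * v ∉ S) :
    ∃ I ⊂ S, ∃ K ⊆ (WAtom.opt Set.univ).lang, ∃ J ⊂ S,
      IsIdeal I ∧ IsIdeal K ∧ IsIdeal J ∧ I * K * J = S := by
  have hu1 : ¬ u ≤ 1 := fun h ↦ huv (by rwa [le_one_iff.1 h, one_mul])
  have hv1 : ¬ v ≤ 1 := fun h ↦ huv (by rwa [le_one_iff.1 h, mul_one])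
  have hsub : S ⊆ (Set.Ici (u * v))ᶜ := fun w hw h ↦ huv (hS.isLowerSet h hw)
  obtain ⟨I, hIu, K, hK1, J, hJv, hI, hK, hJ, rfl⟩ := exists_mul_mul_eq_of_isIdeal hS
    (isUpperSet_Ici u).compl (WAtom.isLowerSet_lang_opt isLowerSet_univ)
    (isUpperSet_Ici v).compl (hsub.trans (compl_Ici_mul_subset hu1 hv1))
  have one_mem_I := one_mem_of_isIdeal hI
  have one_mem_K := one_mem_of_isIdeal hK
  have one_mem_J := one_mem_of_isIdeal hJ
  have hIS : I ⊆ I * K * J := by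
    rw [mul_assoc]
    exact Set.subset_mul_left _ (Set.mul_mem_mul one_mem_K one_mem_J)
  have hJS : J ⊆ I * K * J := Set.subset_mul_right _ (Set.mul_mem_mul one_mem_I one_mem_K)
  exact ⟨I, ⟨hIS, fun h ↦ hIu (h hu) Set.self_mem_Ici⟩, K, hK1,
    J, ⟨hJS, fun h ↦ hJv (h hv) Set.self_mem_Ici⟩, hI, hK, hJ, rfl⟩

theorem mem_products_of_isIdeal [WellQuasiOrderedLE X] {S : Set (Word X)} (hS : IsIdeal S) :
    S ∈ products X := by
  obtain ⟨s, rfl⟩ : ∃ s : LowerSet (Word X), (s : Set (Word X)) = S := ⟨⟨S, hS.isLowerSet⟩, rfl⟩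
  induction s using WellFoundedLT.induction with
  | _ s ih =>
  by_cases hmul : ∀ u ∈ s, ∀ v ∈ s, u * v ∈ s
  · let S : Submonoid (Word X) := ⟨⟨s, fun hu hv ↦ hmul _ hu _ hv⟩, one_mem_of_isIdeal hS⟩
    exact submonoid_mem_products (S := S) s.lower
  · push Not at hmul
    obtain ⟨u, hu, v, hv, huv⟩ := hmul
    obtain ⟨I, hIs, K, hK1, J, hJs, hI, hK, hJ, hIKJ⟩ :=
      exists_ssubset_mul_mul_eq_of_mul_notMem hS hu hv huv
    rw [← hIKJ]
    exact mul_mem (mul_mem (ih ⟨I, hI.isLowerSet⟩ hIs hI) (mem_products_of_subset_lang_opt hK hK1))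
      (ih ⟨J, hJ.isLowerSet⟩ hJs hJ)

theorem ideals_eq_products [WellQuasiOrderedLE X] : ideals X = products X := by
  refine le_antisymm (fun _ hS ↦ mem_products_of_isIdeal hS) ?_
  rw [products, Submonoid.closure_le]
  rintro _ ⟨e, he, rfl⟩
  exact WAtom.isIdeal_lang he

end Word

/-- For a well quasi-ordered set `X`, the ideals of `(X*, ≤*)` — equivalently, the
irreducible closed subsets of `X*` in the Alexandroff topology of `≤*` — are exactly the
denotations of products over `X`. -/
theorem stmt12 {X : Type*} [Preorder X] (hwqo : IsWqo X) (S : Set (List X)) :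
    (S.Nonempty ∧ (∀ u v : List X, WordEmb (· ≤ ·) u v → v ∈ S → u ∈ S) ∧
      ∀ u ∈ S, ∀ v ∈ S, ∃ w ∈ S, WordEmb (· ≤ ·) u w ∧ WordEmb (· ≤ ·) v w) ↔
    ∃ P : List (WAtom X), (∀ e ∈ P, WValidAtom e) ∧ S = wprodDen P := by
  have := hwqo.wellQuasiOrderedLE
  have hideals : (S.Nonempty ∧ (∀ u v : List X, WordEmb (· ≤ ·) u v → v ∈ S → u ∈ S) ∧
      ∀ u ∈ S, ∀ v ∈ S, ∃ w ∈ S, WordEmb (· ≤ ·) u w ∧ WordEmb (· ≤ ·) v w) ↔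
      IsIdeal (FreeMonoid.toList ⁻¹' S : Set (Word X)) :=
    and_congr_right fun _ ↦ and_congr_left fun _ ↦ forall_comm
  rw [hideals, ← Word.mem_ideals, Word.ideals_eq_products, Word.mem_products_iff]
  simp only [FreeMonoid.toList.surjective.preimage_injective.eq_iff]
end

section
/- Let (X,≤) be a quasi-ordered set. On the set X^⊛ of finite multisets over X, the sub-multiset topology induced by the Alexandroff topology of (X,≤) coincides with the Alexandroff topology of the quasi-ordering ≤⊛ (i.e., the sub-multiset-open sets are exactly the ≤⊛-upward-closed sets). -/
/-- The quasi-ordering `≤⊛` on finite multisets: `⦃x₁,…,x_m⦄ ≤⊛ ⦃y₁,…,y_n⦄` iff there is an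
injection `r` with `xᵢ ≤ y_{r(i)}` for all `i`. -/
def MSLE {X : Type*} [Preorder X] (m m' : Multiset X) : Prop :=
  ∃ t ≤ m', Multiset.Rel (· ≤ ·) m t

/-- The basic set `X^⊛ ⊙ U₁ ⊙ U₂ ⊙ … ⊙ Uₙ`: the multisets containing a sub-multiset whose
elements match `U₁,…,Uₙ` bijectively. -/
def msBasic {X : Type*} (Us : List (Set X)) : Set (Multiset X) :=
  {m | ∃ t ≤ m, Multiset.Rel (fun (U : Set X) (x : X) => x ∈ U) ↑Us t}

/-- The sub-multiset topology on `X^⊛` induced by the Alexandroff topology of `(X, ≤)`: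
generated by the sets `X^⊛ ⊙ U₁ ⊙ … ⊙ Uₙ` with `U₁,…,Uₙ` open (i.e. upward closed) in `X`. -/
def submultisetTopOfOrder (X : Type*) [Preorder X] : TopologicalSpace (Multiset X) :=
  TopologicalSpace.generateFrom
    {S | ∃ Us : List (Set X), (∀ U ∈ Us, IsUpperSet U) ∧ S = msBasic Us}

/-!
A multiset `m` lies in `X^⊛ ⊙ ↑x₁ ⊙ ⋯ ⊙ ↑xₙ`, where `↑x` is the principal upper set of `x`, exactly
when `⦃x₁, …, xₙ⦄ ≤⊛ m`. Hence the principal upper sets of `≤⊛` are among the generators of the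
sub-multiset topology. Conversely, every generator is `≤⊛`-upward closed, since a matching of the
`Uᵢ` with elements of `m` can be followed by an embedding of `m` into `m'`. A family of upper sets
containing all the principal ones generates the upper set topology.
-/

open Multiset TopologicalSpace

section Rel

variable {α β γ : Type*}

theorem multisetRel_comp {r : α → β → Prop} {s : β → γ → Prop} {m₁ : Multiset α} {m₂ : Multiset β}
    {m₃ : Multiset γ} (hr : Rel r m₁ m₂) (hs : Rel s m₂ m₃) :
    Rel (Relation.Comp r s) m₁ m₃ := by
  induction hr generalizing m₃ with
  | zero =>
    rw [rel_zero_left.1 hs]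
    exact Rel.zero
  | cons hab _ ih =>
    obtain ⟨c, m₃', hbc, hs', rfl⟩ := rel_cons_left.1 hs
    exact Rel.cons ⟨_, hab, hbc⟩ (ih hs')

theorem exists_le_multisetRel_of_le {r : α → β → Prop} {t m : Multiset α} {m' : Multiset β}
    (htm : t ≤ m) (hr : Rel r m m') : ∃ t' ≤ m', Rel r t t' := by
  obtain ⟨u, rfl⟩ := Multiset.le_iff_exists_add.1 htm
  obtain ⟨t', u', ht', _, rfl⟩ := rel_add_left.1 hr
  exact ⟨t', Multiset.le_add_right t' u', ht'⟩

end Rel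

theorem generateFrom_eq_upperSet {α : Type*} [Preorder α] {B : Set (Set α)}
    (hB : ∀ s ∈ B, IsUpperSet s) (hIci : ∀ a, Set.Ici a ∈ B) :
    generateFrom B = Topology.upperSet α := by
  refine le_antisymm (fun s (hs : IsUpperSet s) => ?_) (le_generateFrom hB)
  let := generateFrom B
  exact isOpen_iff_forall_mem_open.2 fun a ha =>
    ⟨Set.Ici a, hs.Ici_subset ha, isOpen_generateFrom_of_mem (hIci a), Set.self_mem_Ici⟩

section Preorder

variable {X : Type*} [Preorder X]

theorem MSLE.refl (m : Multiset X) : MSLE m m :=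
  ⟨m, le_rfl, rel_refl_of_refl_on fun x _ => le_refl x⟩

theorem MSLE.trans {m₁ m₂ m₃ : Multiset X} (h₁₂ : MSLE m₁ m₂) (h₂₃ : MSLE m₂ m₃) :
    MSLE m₁ m₃ := by
  obtain ⟨t₂, ht₂, hr₁₂⟩ := h₁₂
  obtain ⟨t₃, ht₃, hr₂₃⟩ := h₂₃
  obtain ⟨t, htt₃, hr⟩ := exists_le_multisetRel_of_le ht₂ hr₂₃
  exact ⟨t, htt₃.trans ht₃, hr₁₂.trans (· ≤ ·) hr⟩

theorem MSLE.mem_msBasic {Us : List (Set X)} (hUs : ∀ U ∈ Us, IsUpperSet U) {m m' : Multiset X}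
    (h : MSLE m m') (hm : m ∈ msBasic Us) : m' ∈ msBasic Us := by
  obtain ⟨t, ht, hUt⟩ := hm
  obtain ⟨s, hs, hms⟩ := h
  obtain ⟨t', ht's, htt'⟩ := exists_le_multisetRel_of_le ht hms
  refine ⟨t', ht's.trans hs, (multisetRel_comp hUt htt').mono ?_⟩
  rintro U hU y _ ⟨x, hxU, hxy⟩
  exact hUs U (mem_coe.1 hU) hxy hxU

theorem msBasic_map_Ici (l : List X) : msBasic (l.map Set.Ici) = {m | MSLE (l : Multiset X) m} := by
  simp only [msBasic, MSLE, ← map_coe, rel_map_left, Set.mem_Ici]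

variable (X) in
/-- The quasi-ordering `≤⊛` on finite multisets. It is not an instance because `Multiset X` already
carries the sub-multiset order. -/
abbrev multisetPreorder : Preorder (Multiset X) where
  le := MSLE
  lt m m' := MSLE m m' ∧ ¬MSLE m' m
  le_refl := MSLE.refl
  le_trans _ _ _ := MSLE.trans

variable (X) in
theorem submultisetTopOfOrder_eq_upperSet :
    submultisetTopOfOrder X = @Topology.upperSet (Multiset X) (multisetPreorder X) := by
  refine @generateFrom_eq_upperSet _ (multisetPreorder X) _ ?_ fun m => ?_
  · rintro _ ⟨Us, hUs, rfl⟩ m m' h hm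
    exact MSLE.mem_msBasic hUs h hm
  · obtain ⟨l, rfl⟩ := Quot.exists_rep m
    refine ⟨l.map Set.Ici, ?_, (msBasic_map_Ici l).symm⟩
    exact List.forall_mem_map.2 fun x _ => isUpperSet_Ici x

end Preorder

/-- For a quasi-ordered set `(X, ≤)`, the sub-multiset topology on `X^⊛` induced by the
Alexandroff topology of `X` coincides with the Alexandroff topology of `≤⊛`: a set of finite
multisets is sub-multiset-open iff it is upward closed for `≤⊛`. -/
theorem stmt15 {X : Type*} [Preorder X] (S : Set (Multiset X)) :
    @IsOpen _ (submultisetTopOfOrder X) S ↔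
    ∀ m m' : Multiset X, MSLE m m' → m ∈ S → m' ∈ S := by
  rw [submultisetTopOfOrder_eq_upperSet X]
  exact ⟨fun hS m m' h => hS h, fun hS m m' h => hS m m' h⟩
end

section
/- If X is a Noetherian topological space, then the set X* of finite words over X equipped with the subword topology is Noetherian. -/
/-- The subword topology on `X*` for a topological space `X`: the smallest topology
containing the sets `X*U₁X*U₂X*…X*UₙX*` with `U₁,…,Uₙ` open in `X`. -/
def subwordTop (X : Type*) [TopologicalSpace X] : TopologicalSpace (List X) :=
  TopologicalSpace.generateFrom
    {S | ∃ Us : List (Set X), (∀ U ∈ Us, IsOpen U) ∧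
      S = {w | WordEmb (fun (U : Set X) (x : X) => x ∈ U) Us w}}

/-!
Call a relation `r` between `α` and `β` well if every sequence of related pairs `(aₙ, bₙ)` has
`r aₘ bₙ` for some `m < n`. By compactness (and Alexander's subbase theorem for the converse), a
space generated by the sets `{b | r a b}` is Noetherian iff `r` is well. So it is enough to carry
Nash-Williams' minimal bad sequence proof of Higman's lemma over from well-quasi-orders to well
relations. Transitivity, which is meaningless for `r`, enters that proof twice: in the extraction
of a monotone subsequence, where Ramsey's theorem takes its place, and in the passage from a
subword to the word, which uses only that the subword relation on words over `β` is transitive.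
-/

open Filter Set
open Set.PartiallyWellOrderedOn (IsBadSeq IsMinBadSeq iff_not_exists_isMinBadSeq)
open TopologicalSpace (Opens NoetherianSpace generateFrom noetherianSpace_iff_isCompact)

section WellRel

variable {α β γ : Type*} {r : α → β → Prop}

theorem exists_strictMono_of_eventually_eventually {r : ℕ → ℕ → Prop} {l : Filter ℕ} [l.NeBot]
    (hl : l ≤ atTop) (h : ∀ᶠ m in l, ∀ᶠ n in l, r m n) :
    ∃ φ : ℕ → ℕ, StrictMono φ ∧ ∀ m n, m < n → r (φ m) (φ n) := by
  obtain ⟨φ, -, hφ⟩ := exists_seq_of_forall_finset_exists (fun m ↦ ∀ᶠ n in l, r m n)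
    (fun m n ↦ m < n ∧ r m n) fun s hs ↦ by
      have hgt (m : ℕ) : ∀ᶠ n in l, m < n := (eventually_gt_atTop m).filter_mono hl
      exact (h.and ((eventually_all_finset s).2 fun m hm ↦ (hgt m).and (hs m hm))).exists
  exact ⟨φ, fun m n hmn ↦ (hφ m n hmn).1, fun m n hmn ↦ (hφ m n hmn).2⟩

theorem exists_strictMono_forall_lt_or_forall_lt_not (r : ℕ → ℕ → Prop) :
    ∃ φ : ℕ → ℕ, StrictMono φ ∧
      ((∀ m n, m < n → r (φ m) (φ n)) ∨ ∀ m n, m < n → ¬r (φ m) (φ n)) := by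
  by_cases h : ∀ᶠ m in hyperfilter ℕ, ∀ᶠ n in hyperfilter ℕ, r m n
  · obtain ⟨φ, hφ, hr⟩ := exists_strictMono_of_eventually_eventually Nat.hyperfilter_le_atTop h
    exact ⟨φ, hφ, .inl hr⟩
  · simp only [← Ultrafilter.eventually_not] at h
    obtain ⟨φ, hφ, hr⟩ := exists_strictMono_of_eventually_eventually Nat.hyperfilter_le_atTop h
    exact ⟨φ, hφ, .inr hr⟩

-- `f` up to `φ 0`, continued by `g`, would be a bad sequence contradicting minimality.
theorem exists_lt_of_isMinBadSeq {r : α → α → Prop} {rk : α → ℕ} {s : Set α} {f g : ℕ → α}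
    {φ : ℕ → ℕ} (hf : IsBadSeq r s f) (hmin : IsMinBadSeq r rk s (φ 0) f) (hφ : ∀ n, φ 0 ≤ φ n)
    (hgs : ∀ n, g n ∈ s) (hrk : rk (g 0) < rk (f (φ 0)))
    (hg : ∀ m n, r (f m) (g n) → r (f m) (f (φ n))) : ∃ m n, m < n ∧ r (g m) (g n) := by
  by_contra! hbad
  refine hmin (fun n ↦ if n < φ 0 then f n else g (n - φ 0)) (fun m hm ↦ (if_pos hm).symm)
    (by simpa using hrk) ⟨fun n ↦ ?_, fun m n hmn ↦ ?_⟩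
  · dsimp only
    split_ifs
    exacts [hf.1 n, hgs _]
  · rcases lt_or_ge n (φ 0) with hn | hn
    · simpa only [hn, hmn.trans hn, if_true] using hf.2 m n hmn
    rcases lt_or_ge m (φ 0) with hm | hm
    · simp only [hm, hn.not_gt, if_true, if_false]
      exact fun h ↦ hf.2 _ _ (hm.trans_le (hφ _)) (hg _ _ h)
    · simp only [hm.not_gt, hn.not_gt, if_false]
      exact hbad _ _ (by lia)

namespace WordEmb

theorem trans_sublist {l : List α} {v w : List β} (h : WordEmb r l v) (hvw : v.Sublist w) :
    WordEmb r l w := by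
  induction hvw generalizing l with
  | slnil => exact h
  | cons _ _ ih => exact .skip (ih h)
  | cons_cons _ _ ih =>
    cases h with
    | nil => exact .nil _
    | cons hab h => exact .cons hab (ih h)
    | skip h => exact .skip (ih h)

theorem exists_cons_sublist {a : α} {l : List α} {w : List β} (h : WordEmb r (a :: l) w) :
    ∃ b v, r a b ∧ WordEmb r l v ∧ (b :: v).Sublist w := by
  induction w with
  | nil => cases h
  | cons c w ih =>
    cases h with
    | cons hac h => exact ⟨c, w, hac, h, .refl _⟩
    | skip h =>
      obtain ⟨b, v, hab, hv, hsub⟩ := ih h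
      exact ⟨b, v, hab, hv, hsub.cons c⟩

theorem map_left_iff {f : γ → α} {l : List γ} {w : List β} :
    WordEmb r (l.map f) w ↔ WordEmb (fun c b ↦ r (f c) b) l w := by
  constructor <;> intro h
  · generalize hl : l.map f = l' at h
    induction h generalizing l with
    | nil => exact List.map_eq_nil_iff.1 hl ▸ .nil _
    | cons hab _ ih =>
      obtain ⟨c, l, rfl, rfl, rfl⟩ := List.map_eq_cons_iff.1 hl
      exact .cons hab (ih rfl)
    | skip _ ih => exact .skip (ih hl)
  · induction h with
    | nil => exact .nil _
    | cons hab _ ih => exact .cons hab ih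
    | skip _ ih => exact .skip ih

end WordEmb

/-- A relation between two types is *well* if every sequence of related pairs `(a n, b n)` has
`r (a m) (b n)` for some `m < n`. A preorder is well in this sense iff it is a well-quasi-order;
membership of points in open sets is well iff the space is Noetherian. -/
def IsWellRel (r : α → β → Prop) : Prop :=
  ∀ (a : ℕ → α) (b : ℕ → β), (∀ n, r (a n) (b n)) → ∃ m n, m < n ∧ r (a m) (b n)

theorem isWellRel_iff_partiallyWellOrderedOn :
    IsWellRel r ↔
      {p : α × β | r p.1 p.2}.PartiallyWellOrderedOn fun p q ↦ r p.1 q.2 := by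
  rw [partiallyWellOrderedOn_iff_exists_lt]
  exact ⟨fun h f hf ↦ h (fun n ↦ (f n).1) (fun n ↦ (f n).2) hf,
    fun h a b hab ↦ h (fun n ↦ (a n, b n)) hab⟩

namespace IsWellRel

theorem exists_strictMono (hr : IsWellRel r) {a : ℕ → α} {b : ℕ → β} (hab : ∀ n, r (a n) (b n)) :
    ∃ φ : ℕ → ℕ, StrictMono φ ∧ ∀ m n, m < n → r (a (φ m)) (b (φ n)) := by
  obtain ⟨φ, hφ, hgood | hbad⟩ :=
    exists_strictMono_forall_lt_or_forall_lt_not fun m n ↦ r (a m) (b n)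
  · exact ⟨φ, hφ, hgood⟩
  · obtain ⟨m, n, hmn, h⟩ := hr (a ∘ φ) (b ∘ φ) fun n ↦ hab (φ n)
    exact absurd h (hbad m n hmn)

theorem wordEmb (hr : IsWellRel r) : IsWellRel (WordEmb r) := by
  rw [isWellRel_iff_partiallyWellOrderedOn, iff_not_exists_isMinBadSeq fun p ↦ p.1.length]
  rintro ⟨f, hf, hmin⟩
  have hbad (m n : ℕ) (hmn : m < n) : ¬WordEmb r (f m).1 (f n).2 := hf.2 m n hmn
  have hcons (n : ℕ) : ∃ a l b v,
      (f n).1 = a :: l ∧ r a b ∧ WordEmb r l v ∧ (b :: v).Sublist (f n).2 := by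
    have hn : WordEmb r (f n).1 (f n).2 := hf.1 n
    rcases hl : (f n).1 with _ | ⟨a, l⟩
    · exact absurd (hl ▸ .nil _) (hbad n (n + 1) n.lt_succ_self)
    · obtain ⟨b, v, h⟩ := (hl ▸ hn).exists_cons_sublist
      exact ⟨a, l, b, v, rfl, h⟩
  choose a l b v hfal hab hlv hbv using hcons
  obtain ⟨φ, hφ, hgood⟩ := hr.exists_strictMono hab
  obtain ⟨m, n, hmn, h⟩ : ∃ m n, m < n ∧ WordEmb r (l (φ m)) (v (φ n)) :=
    exists_lt_of_isMinBadSeq (g := fun n ↦ (l (φ n), v (φ n))) hf (hmin (φ 0))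
      (fun n ↦ hφ.monotone n.zero_le) (fun n ↦ hlv (φ n)) (by simp [hfal])
      fun _ n h ↦ h.trans_sublist ((List.sublist_cons_self _ _).trans (hbv (φ n)))
  refine hbad (φ m) (φ n) (hφ hmn) ?_
  rw [hfal]
  exact (WordEmb.cons (hgood m n hmn) h).trans_sublist (hbv (φ n))

theorem of_isOpen [TopologicalSpace β] [NoetherianSpace β] (hr : ∀ a, IsOpen {b | r a b}) :
    IsWellRel r := by
  intro a b hab
  obtain ⟨t, ht⟩ := (NoetherianSpace.isCompact (⋃ n, {y | r (a n) y})).elim_finite_subcover _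
    (fun n ↦ hr (a n)) Subset.rfl
  obtain ⟨n, hn⟩ := t.exists_nat_subset_range
  have hbn : b n ∈ ⋃ m ∈ t, {y | r (a m) y} := ht (mem_iUnion.2 ⟨n, hab n⟩)
  obtain ⟨m, hm, hmn⟩ := mem_iUnion₂.1 hbn
  exact ⟨m, n, Finset.mem_range.1 (hn hm), hmn⟩

theorem noetherianSpace_generateFrom (hr : IsWellRel r) :
    @NoetherianSpace β (generateFrom (range fun a ↦ {b | r a b})) := by
  let := generateFrom (range fun a ↦ {b | r a b})
  refine noetherianSpace_iff_isCompact.2 fun s ↦ isCompact_generateFrom rfl fun P hP hs ↦ ?_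
  by_contra! hcover
  have hnext (t : Finset (α × β)) (ht : ∀ p ∈ t, r p.1 p.2 ∧ {b | r p.1 b} ∈ P) :
      ∃ q : α × β, (r q.1 q.2 ∧ {b | r q.1 b} ∈ P) ∧ ∀ p ∈ t, ¬r p.1 q.2 := by
    obtain ⟨y, hys, hy⟩ := not_subset.1 <| hcover ((fun p : α × β ↦ {b | r p.1 b}) '' t)
      (image_subset_iff.2 fun p hp ↦ (ht p hp).2) (t.finite_toSet.image _)
    obtain ⟨U, hU, hyU⟩ := hs hys
    obtain ⟨a, rfl⟩ := hP hU
    exact ⟨(a, y), ⟨hyU, hU⟩, fun p hp h ↦ hy ⟨_, mem_image_of_mem _ hp, h⟩⟩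
  obtain ⟨f, hf, hbad⟩ := exists_seq_of_forall_finset_exists _ _ hnext
  obtain ⟨m, n, hmn, h⟩ := hr (fun n ↦ (f n).1) (fun n ↦ (f n).2) fun n ↦ (hf n).1
  exact hbad m n hmn h

end IsWellRel

end WellRel

theorem subwordTop_eq_generateFrom_range (X : Type*) [TopologicalSpace X] :
    subwordTop X = generateFrom
      (range fun Us : List (Opens X) ↦ {w | WordEmb (fun (U : Opens X) x ↦ x ∈ U) Us w}) := by
  have hcoe (Us : List (Opens X)) : {w | WordEmb (fun (U : Opens X) x ↦ x ∈ U) Us w} =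
      {w | WordEmb (fun (U : Set X) x ↦ x ∈ U) (Us.map (↑)) w} :=
    Set.ext fun _ ↦ (WordEmb.map_left_iff (r := fun (U : Set X) x ↦ x ∈ U)).symm
  refine congrArg generateFrom (Set.ext fun S ↦ ⟨?_, ?_⟩)
  · rintro ⟨Us, hUs, rfl⟩
    lift Us to List (Opens X) using hUs
    exact ⟨Us, hcoe Us⟩
  · rintro ⟨Us, rfl⟩
    exact ⟨Us.map (↑), by simp +contextual [Opens.isOpen], hcoe Us⟩

/-- If `X` is a Noetherian topological space, then `X*` with the subword topology is
Noetherian. -/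
theorem stmt16 {X : Type*} [TopologicalSpace X] [TopologicalSpace.NoetherianSpace X] :
    @TopologicalSpace.NoetherianSpace (List X) (subwordTop X) := by
  have hmem : IsWellRel fun (U : Opens X) (x : X) ↦ x ∈ U := .of_isOpen Opens.isOpen
  rw [subwordTop_eq_generateFrom_range]
  exact hmem.wordEmb.noetherianSpace_generateFrom
end
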